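/- (Bernal's lemma) Let X be a separable metrizable topological vector space over ℝ, and let A, B ⊂ X with A ∩ B = ∅. Assume A is maximal lineable in X (there exists a linear subspace M of X with dim M = dim X and M \ {0} ⊂ A), B is dense-lineable in X (there exists a dense linear subspace D of X with D \ {0} ⊂ B), and A + B ⊂ A. Then A is maximal dense-lineable in X: there exists a dense linear subspace E of X with dim E = dim X and E \ {0} ⊂ A. -/

import Mathlib

open Filter Topology

/-!
If `X` is finite-dimensional, then `M = X`. Otherwise `M` is tilted towards `D`: take a Hamel basis
`w` of `D` and distinct Hamel basis vectors `v j n` of `M`, which exist because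
`dim D * ℵ₀ ≤ dim M`, and choose scalars `t j n ≠ 0` with `t j n • v j n → 0` as
`n → ∞`. A linear map `L : M → D` sending `v j n` to `(t j n)⁻¹ • w j` satisfies
`(1 + L) (t j n • v j n) → w j`, so the closure of the range of `1 + L` contains `D`. If `0 ∉ A`,
then `1 + L` is injective because it maps nonzero vectors into `A + (B ∪ {0}) ⊆ A`, and its range is
the required subspace. If `0 ∈ A`, then `B ⊆ A` and `M + D` is itself contained in `A`.
-/

theorem exists_ne_zero_tendsto_smul_nhds_zero {𝕜 X : Type*} [Zero 𝕜] [Zero X] [SMulWithZero 𝕜 X]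
    [TopologicalSpace 𝕜] [(𝓝[≠] (0 : 𝕜)).NeBot] [TopologicalSpace X] [ContinuousSMul 𝕜 X]
    [(𝓝 (0 : X)).IsCountablyGenerated] (x : ℕ → X) :
    ∃ t : ℕ → 𝕜, (∀ n, t n ≠ 0) ∧ Tendsto (fun n => t n • x n) atTop (𝓝 0) := by
  obtain ⟨U, hU⟩ := (𝓝 (0 : X)).exists_antitone_basis
  have exists_scalar (n : ℕ) : ∃ t : 𝕜, t ≠ 0 ∧ t • x n ∈ U n := by
    have tendsto_smul : Tendsto (fun t : 𝕜 => t • x n) (𝓝 0) (𝓝 0) :=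
      Continuous.tendsto' (by fun_prop) _ _ (zero_smul 𝕜 (x n))
    have smul_mem : ∀ᶠ t : 𝕜 in 𝓝[≠] 0, t • x n ∈ U n :=
      (tendsto_smul.mono_left nhdsWithin_le_nhds).eventually_mem (hU.mem n)
    exact (eventually_mem_nhdsWithin.and smul_mem).exists
  choose t ht htU using exists_scalar
  exact ⟨t, ht, hU.tendsto htU⟩

theorem dense_of_denseRange_of_basis_mem_closure {R X N ι : Type*} [Semiring R] [AddCommMonoid X]
    [Module R X] [TopologicalSpace X] [ContinuousAdd X] [ContinuousConstSMul R X] [AddCommMonoid N]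
    [Module R N] {g : N →ₗ[R] X} (hg : DenseRange g) (w : Module.Basis ι R N) {S : Submodule R X}
    (hS : ∀ i, g (w i) ∈ closure (S : Set X)) : Dense (S : Set X) := by
  have range_le : LinearMap.range g ≤ S.topologicalClosure := by
    rw [LinearMap.range_eq_map, ← w.span_eq, Submodule.map_span_le]
    rintro _ ⟨i, rfl⟩
    exact hS i
  exact dense_closure.mp (hg.mono range_le)

universe u

open Cardinal in
theorem nonempty_prod_nat_embedding_of_mk_le {α β : Type u} (hβ : ℵ₀ ≤ #β) (hαβ : #α ≤ #β) :
    Nonempty (α × ℕ ↪ β) := by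
  rw [← lift_mk_le']
  simpa only [mk_prod, lift_id, lift_uzero, mk_nat, lift_aleph0] using mul_le_of_le hβ hαβ hβ

open Cardinal in
theorem exists_denseRange_add_comp {𝕜 X : Type*} {M N : Type u} [DivisionRing 𝕜]
    [TopologicalSpace 𝕜] [(𝓝[≠] (0 : 𝕜)).NeBot] [AddCommGroup X] [Module 𝕜 X] [TopologicalSpace X]
    [ContinuousAdd X] [ContinuousSMul 𝕜 X] [FirstCountableTopology X] [AddCommGroup M] [Module 𝕜 M]
    [AddCommGroup N] [Module 𝕜 N] (f : M →ₗ[𝕜] X) {g : N →ₗ[𝕜] X} (hg : DenseRange g)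
    (hM : ℵ₀ ≤ Module.rank 𝕜 M) (hNM : Module.rank 𝕜 N ≤ Module.rank 𝕜 M) :
    ∃ L : M →ₗ[𝕜] N, DenseRange (f + g ∘ₗ L) := by
  let v := Module.Free.chooseBasis 𝕜 M
  let w := Module.Free.chooseBasis 𝕜 N
  rw [Module.Free.rank_eq_card_chooseBasisIndex] at hM
  rw [Module.Free.rank_eq_card_chooseBasisIndex, Module.Free.rank_eq_card_chooseBasisIndex] at hNM
  obtain ⟨e⟩ := nonempty_prod_nat_embedding_of_mk_le hM hNM
  choose t ht_ne ht_tendsto using fun j =>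
    exists_ne_zero_tendsto_smul_nhds_zero (𝕜 := 𝕜) fun n => f (v (e (j, n)))
  let L : M →ₗ[𝕜] N := v.constr ℕ (Function.extend e (fun p => (t p.1 p.2)⁻¹ • w p.1) 0)
  have hL (j n) : L (v (e (j, n))) = (t j n)⁻¹ • w j := by
    simp only [L, Module.Basis.constr_basis, e.injective.extend_apply]
  have map_smul_basis (j n) :
      (f + g ∘ₗ L) (t j n • v (e (j, n))) = t j n • f (v (e (j, n))) + g (w j) := by
    simp only [LinearMap.add_apply, LinearMap.comp_apply, map_smul, hL, smul_add,
      smul_inv_smul₀ (ht_ne j n)]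
  have basis_mem_closure (j) : g (w j) ∈ closure (LinearMap.range (f + g ∘ₗ L) : Set X) := by
    have tendsto_basis : Tendsto (fun n => (f + g ∘ₗ L) (t j n • v (e (j, n)))) atTop
        (𝓝 (g (w j))) := by
      simpa only [map_smul_basis, zero_add] using (ht_tendsto j).add_const (g (w j))
    exact mem_closure_of_tendsto tendsto_basis (.of_forall fun n => LinearMap.mem_range_self _ _)
  exact ⟨L, dense_of_denseRange_of_basis_mem_closure hg w basis_mem_closure⟩

theorem injective_of_forall_ne_zero_apply_mem {F G H : Type*} [AddGroup G] [AddMonoid H]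
    [FunLike F G H] [AddMonoidHomClass F G H] {T : F} {A : Set H} (hA0 : (0 : H) ∉ A)
    (hT : ∀ m, m ≠ 0 → T m ∈ A) : Function.Injective T :=
  (injective_iff_map_eq_zero T).mpr fun m hm => by_contra fun hm0 => hA0 (hm ▸ hT m hm0)

section AddInvariantSet

variable {R X : Type*} [Semiring R] [AddCommMonoid X] [Module R X] {A : Set X}
  {M D : Submodule R X}

theorem coe_sup_subset_of_zero_mem (hA0 : (0 : X) ∈ A) (hMA : (M : Set X) \ {0} ⊆ A)
    (hAD : ∀ a ∈ A, ∀ d ∈ D, a + d ∈ A) : ((M ⊔ D : Submodule R X) : Set X) ⊆ A := by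
  have hM_subset : (M : Set X) ⊆ A := by
    simpa only [Set.sdiff_singleton_subset_iff, Set.insert_eq_of_mem hA0] using hMA
  intro x hx
  obtain ⟨m, hm, d, hd, rfl⟩ := Submodule.mem_sup.mp hx
  exact hAD m (hM_subset hm) d hd

theorem subtype_add_comp_apply_mem (hMA : (M : Set X) \ {0} ⊆ A)
    (hAD : ∀ a ∈ A, ∀ d ∈ D, a + d ∈ A) (L : M →ₗ[R] D) {m : M} (hm : m ≠ 0) :
    (M.subtype + D.subtype ∘ₗ L) m ∈ A :=
  hAD m (hMA ⟨m.2, by simpa using hm⟩) (L m) (L m).2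

theorem coe_range_sdiff_singleton_zero_subset {N : Type*} [AddCommMonoid N] [Module R N]
    {T : N →ₗ[R] X} (hT : ∀ m, m ≠ 0 → T m ∈ A) : (LinearMap.range T : Set X) \ {0} ⊆ A := by
  rintro _ ⟨⟨m, rfl⟩, hm⟩
  exact hT m fun h => hm (by rw [h, map_zero, Set.mem_singleton_iff])

end AddInvariantSet

theorem stmt8_general {𝕜 X : Type*} [DivisionRing 𝕜] [TopologicalSpace 𝕜]
    [(𝓝[≠] (0 : 𝕜)).NeBot] [AddCommGroup X] [Module 𝕜 X] [TopologicalSpace X] [ContinuousAdd X]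
    [ContinuousSMul 𝕜 X] [FirstCountableTopology X] (A B : Set X)
    (hA : ∃ M : Submodule 𝕜 X, Module.rank 𝕜 M = Module.rank 𝕜 X ∧ (M : Set X) \ {0} ⊆ A)
    (hB : ∃ D : Submodule 𝕜 X, Dense (D : Set X) ∧ (D : Set X) \ {0} ⊆ B)
    (hsum : ∀ x ∈ A, ∀ y ∈ B, x + y ∈ A) :
    ∃ E : Submodule 𝕜 X, Dense (E : Set X) ∧
      Module.rank 𝕜 E = Module.rank 𝕜 X ∧ (E : Set X) \ {0} ⊆ A := by
  obtain ⟨M, hM, hMA⟩ := hA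
  obtain ⟨D, hD, hDB⟩ := hB
  have hAD : ∀ a ∈ A, ∀ d ∈ D, a + d ∈ A := by
    intro a ha d hd
    by_cases hd0 : d = 0
    · simpa only [hd0, add_zero] using ha
    · exact hsum a ha d (hDB ⟨hd, hd0⟩)
  by_cases hA0 : (0 : X) ∈ A
  · exact ⟨M ⊔ D, hD.mono (SetLike.coe_mono le_sup_right),
      (Submodule.rank_le _).antisymm (hM ▸ Submodule.rank_mono le_sup_left),
      Set.sdiff_subset.trans (coe_sup_subset_of_zero_mem hA0 hMA hAD)⟩
  rcases lt_or_ge (Module.rank 𝕜 X) Cardinal.aleph0 with hfin | hinf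
  · have : Module.Finite 𝕜 X := Module.rank_lt_aleph0_iff.mp hfin
    have hM_top : M = ⊤ := Submodule.eq_top_of_finrank_eq (congrArg Cardinal.toNat hM)
    exact ⟨M, by simp only [hM_top, Submodule.top_coe, dense_univ], hM, hMA⟩
  · obtain ⟨L, hL⟩ := exists_denseRange_add_comp M.subtype
      (g := D.subtype) hD.denseRange_val (hM ▸ hinf) (hM ▸ Submodule.rank_le D)
    have hT (m : M) (hm : m ≠ 0) := subtype_add_comp_apply_mem hMA hAD L hm
    have hT_inj := injective_of_forall_ne_zero_apply_mem hA0 hT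
    exact ⟨LinearMap.range (M.subtype + D.subtype ∘ₗ L), hL,
      (rank_range_of_injective _ hT_inj).trans hM, coe_range_sdiff_singleton_zero_subset hT⟩

/-- Bernal's lemma: in a separable metrizable topological vector space, if `A` is
maximal lineable, `B` is dense-lineable, `A ∩ B = ∅` and `A + B ⊆ A`, then `A`
is maximal dense-lineable. -/
theorem stmt8 {X : Type*} [AddCommGroup X] [Module ℝ X] [TopologicalSpace X]
    [IsTopologicalAddGroup X] [ContinuousSMul ℝ X]
    [TopologicalSpace.SeparableSpace X] [TopologicalSpace.MetrizableSpace X]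
    (A B : Set X) (hAB : A ∩ B = ∅)
    (hA : ∃ M : Submodule ℝ X, Module.rank ℝ M = Module.rank ℝ X ∧
      (M : Set X) \ {0} ⊆ A)
    (hB : ∃ D : Submodule ℝ X, Dense (D : Set X) ∧ (D : Set X) \ {0} ⊆ B)
    (hsum : ∀ x ∈ A, ∀ y ∈ B, x + y ∈ A) :
    ∃ E : Submodule ℝ X, Dense (E : Set X) ∧
      Module.rank ℝ E = Module.rank ℝ X ∧ (E : Set X) \ {0} ⊆ A := by
  exact stmt8_general A B hA hB hsum
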